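/- Let k ≥ 2 with ω_k = 1, write Ω = Ω_{k−1}, and assume 2 < Ω ≤ 2(1+√2). Set r = (Ω − 2)/Ω and define δ by δ₀ = (4(Ω+1) − Ω²)/Ω³ and δ_j = 0 otherwise, and β by β₀ = (Ω+1)/Ω², β_{k−1} = (Ω+1)²/Ω², and β_j = 0 otherwise. Then δ and β are nonnegative and satisfy the order-3 conditions with parameter r, and moreover for any real s > 0 and any nonnegative vectors δ', β' satisfying the order-3 conditions with parameter s one has s ≤ r. That is, for 2 < Ω_{k−1} ≤ 2(1+√2) the stated third-order formula has the optimal SSP coefficient (Ω_{k−1} − 2)/Ω_{k−1}. -/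

import Mathlib

/-- Cumulative step-size ratios: `OmegaSum ω j = ω 1 + ⋯ + ω j` (with `OmegaSum ω 0 = 0`). -/
noncomputable def OmegaSum (ω : ℕ → ℝ) (j : ℕ) : ℝ := ∑ i ∈ Finset.range j, ω (i + 1)

/-- The order-`p` conditions with parameter `r` for a `k`-step explicit linear multistep
formula with coefficient vectors `δ`, `β` and step-size ratios `ω`:
`Σ_{j<k} (δ j + r β j) = 1` and, for `1 ≤ m ≤ p`,
`Σ_{j<k} ( Ω_j^m (δ j + r β j) + m Ω_j^{m-1} β j ) = Ω_k^m`. -/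
def OrderCond (k p : ℕ) (ω : ℕ → ℝ) (r : ℝ) (δ β : ℕ → ℝ) : Prop :=
  (∑ j ∈ Finset.range k, (δ j + r * β j)) = 1 ∧
  ∀ m : ℕ, 1 ≤ m → m ≤ p →
    (∑ j ∈ Finset.range k,
        ((OmegaSum ω j) ^ m * (δ j + r * β j)
          + (m : ℝ) * (OmegaSum ω j) ^ (m - 1) * β j))
      = (OmegaSum ω k) ^ m

/-!
Write `x_j = Ω_j` and `T = Ω_k`. Subtracting the condition of order `m + 2` from `T` times the one
of order `m + 1` leaves

  `∑ x_j ^ (m + 1) (T - x_j) δ_j + ∑ x_j ^ m ((m + 1 + s x_j) (T - x_j) - x_j) β_j = 0`.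

The bracket multiplying `β_j` is a concave quadratic in `x_j`, positive at `0`. Were it also
positive at the last node `Ω_{k-1}`, it would be positive at every node; then all terms of the sum
would vanish, and with them the left-hand side of the order `m + 1` condition, which is
`T ^ (m + 1) > 0`. Hence the bracket is nonpositive at `Ω_{k-1}`, and for `m = 1` this is
`s ≤ (Ω - 2) / Ω`. In the case of equality only `δ_0`, `β_0` and `β_{k-1}` can be nonzero, and the
order conditions determine them.
-/

open Finset

section OmegaSum

variable {ω : ℕ → ℝ} {j n : ℕ}

lemma omegaSum_zero (ω : ℕ → ℝ) : OmegaSum ω 0 = 0 := sum_range_zero _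

lemma omegaSum_succ (ω : ℕ → ℝ) (j : ℕ) : OmegaSum ω (j + 1) = OmegaSum ω j + ω (j + 1) :=
  sum_range_succ _ _

lemma omegaSum_nonneg (hω : ∀ i < j, 0 ≤ ω (i + 1)) : 0 ≤ OmegaSum ω j :=
  sum_nonneg fun i hi => hω i (mem_range.mp hi)

lemma omegaSum_pos (hj : j ≠ 0) (hω : ∀ i < j, 0 < ω (i + 1)) : 0 < OmegaSum ω j :=
  sum_pos (fun i hi => hω i (mem_range.mp hi)) (nonempty_range_iff.mpr hj)

lemma omegaSum_le_omegaSum (hω : ∀ i < n, 0 ≤ ω (i + 1)) (hjn : j ≤ n) :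
    OmegaSum ω j ≤ OmegaSum ω n :=
  sum_le_sum_of_subset_of_nonneg (range_subset_range.mpr hjn)
    fun i hi _ => hω i (mem_range.mp hi)

end OmegaSum

lemma sum_range_succ_eq_add_of_endpoints {M : Type*} [AddCommMonoid M] {n : ℕ} {f : ℕ → M}
    (hn : n ≠ 0) (hf : ∀ j, j ≠ 0 → j ≠ n → f j = 0) :
    ∑ j ∈ range (n + 1), f j = f 0 + f n :=
  sum_eq_add_of_mem 0 n (by simp) (by simp) hn.symm fun j _ hj => hf j hj.1 hj.2

lemma concave_quadratic_pos {a b c x y : ℝ} (ha : 0 ≤ a) (hc : 0 < c)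
    (hy : 0 < c + y * (b - a * y)) (hx : 0 ≤ x) (hxy : x ≤ y) : 0 < c + x * (b - a * x) := by
  rcases le_total 0 (b - a * x) with hslope | hslope
  · exact add_pos_of_pos_of_nonneg hc (mul_nonneg hx hslope)
  · have hy0 : 0 ≤ y := hx.trans hxy
    calc 0 < c + y * (b - a * y) := hy
      _ ≤ c + y * (b - a * x) := by gcongr
      _ ≤ c + x * (b - a * x) := by gcongr c + ?_; exact mul_le_mul_of_nonpos_right hxy hslope

namespace OrderCond

variable {k n p m : ℕ} {ω δ β : ℕ → ℝ} {s : ℝ}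

lemma sum_weighted_eq_zero (h : OrderCond k p ω s δ β) (hm : m + 2 ≤ p) :
    ∑ j ∈ range k,
      (OmegaSum ω j ^ (m + 1) * (OmegaSum ω k - OmegaSum ω j) * δ j
        + OmegaSum ω j ^ m
          * ((m + 1 + s * OmegaSum ω j) * (OmegaSum ω k - OmegaSum ω j) - OmegaSum ω j) * β j)
      = 0 := by
  have hlow := h.2 (m + 1) (by omega) (by omega)
  have hhigh := h.2 (m + 2) (by omega) hm
  have hdiff := sub_eq_zero.mpr ((pow_succ' (OmegaSum ω k) (m + 1)).symm)
  rw [← hhigh, ← hlow, mul_sum, ← sum_sub_distrib] at hdiff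
  rw [← hdiff]
  refine sum_congr rfl fun j _ => ?_
  simp only [Nat.add_succ_sub_one]
  push_cast
  ring

lemma exists_node_weight_nonpos (h : OrderCond k p ω s δ β) (hm : m + 2 ≤ p)
    (hδ : ∀ j < k, 0 ≤ δ j) (hβ : ∀ j < k, 0 ≤ β j)
    (hx : ∀ j < k, 0 ≤ OmegaSum ω j) (hxT : ∀ j < k, OmegaSum ω j < OmegaSum ω k)
    (hT : OmegaSum ω k ≠ 0) :
    ∃ j < k,
      (m + 1 + s * OmegaSum ω j) * (OmegaSum ω k - OmegaSum ω j) - OmegaSum ω j ≤ 0 := by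
  by_contra! hpos
  have hδterm : ∀ j < k, 0 ≤ OmegaSum ω j ^ (m + 1) * (OmegaSum ω k - OmegaSum ω j) * δ j :=
    fun j hj => mul_nonneg
      (mul_nonneg (pow_nonneg (hx j hj) _) (sub_pos.mpr (hxT j hj)).le) (hδ j hj)
  have hβterm : ∀ j < k, 0 ≤ OmegaSum ω j ^ m
      * ((m + 1 + s * OmegaSum ω j) * (OmegaSum ω k - OmegaSum ω j) - OmegaSum ω j) * β j :=
    fun j hj => mul_nonneg (mul_nonneg (pow_nonneg (hx j hj) _) (hpos j hj).le) (hβ j hj)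
  have hterms := (sum_eq_zero_iff_of_nonneg fun j hj => add_nonneg
    (hδterm j (mem_range.mp hj)) (hβterm j (mem_range.mp hj))).mp (h.sum_weighted_eq_zero hm)
  refine pow_ne_zero (m + 1) hT ?_
  rw [← h.2 (m + 1) (by omega) (by omega)]
  refine sum_eq_zero fun j hj => ?_
  have hjk := mem_range.mp hj
  obtain ⟨hδzero, hβzero⟩ :=
    (add_eq_zero_iff_of_nonneg (hδterm j hjk) (hβterm j hjk)).mp (hterms j hj)
  have hδ0 : OmegaSum ω j ^ (m + 1) * δ j = 0 := by
    rw [mul_right_comm] at hδzero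
    exact (mul_eq_zero.mp hδzero).resolve_right (sub_pos.mpr (hxT j hjk)).ne'
  have hβ0 : OmegaSum ω j ^ m * β j = 0 := by
    rw [mul_right_comm] at hβzero
    exact (mul_eq_zero.mp hβzero).resolve_right (hpos j hjk).ne'
  rw [Nat.add_sub_cancel]
  linear_combination hδ0 + (s * OmegaSum ω j + (m + 1 : ℕ)) * hβ0

theorem mul_last_step_le (h : OrderCond (n + 1) p ω s δ β) (hm : m + 2 ≤ p) (hs : 0 ≤ s)
    (hδ : ∀ j < n + 1, 0 ≤ δ j) (hβ : ∀ j < n + 1, 0 ≤ β j)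
    (hω : ∀ i < n, 0 ≤ ω (i + 1)) (hlast : 0 < ω (n + 1)) :
    (m + 1 + s * OmegaSum ω n) * ω (n + 1) ≤ OmegaSum ω n := by
  have hT := omegaSum_succ ω n
  have hnode_nonneg : ∀ j < n + 1, 0 ≤ OmegaSum ω j := fun j hj =>
    omegaSum_nonneg fun i hi => hω i (by omega)
  have hnode_le : ∀ j < n + 1, OmegaSum ω j ≤ OmegaSum ω n := fun j hj =>
    omegaSum_le_omegaSum hω (by omega)
  have hTpos : 0 < OmegaSum ω (n + 1) := by linarith [hnode_nonneg n n.lt_succ_self]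
  obtain ⟨j, hj, hweight⟩ := h.exists_node_weight_nonpos hm hδ hβ hnode_nonneg
    (fun j hj => by linarith [hnode_le j hj]) hTpos.ne'
  by_contra! hlt
  refine hweight.not_gt ?_
  have hquad := concave_quadratic_pos (b := s * OmegaSum ω (n + 1) - (m + 2)) hs
    (by positivity : 0 < (m + 1) * OmegaSum ω (n + 1))
    (by rw [hT]; linarith) (hnode_nonneg j hj) (hnode_le j hj)
  linarith

end OrderCond

section ThirdOrder

/-- The coefficients `δ` of the optimal third-order formula, as a function of `Ω = Ω_{k-1}`, in the
normalization `ω_k = 1`. -/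
noncomputable def thirdOrderDelta (Ω : ℝ) : ℕ → ℝ :=
  fun j => if j = 0 then (4 * (Ω + 1) - Ω ^ 2) / Ω ^ 3 else 0

/-- The coefficients `β` of the optimal third-order formula with `k = n + 1` steps, as a function of
`Ω = Ω_n`, in the normalization `ω_k = 1`. -/
noncomputable def thirdOrderBeta (n : ℕ) (Ω : ℝ) : ℕ → ℝ :=
  fun j => if j = n then (Ω + 1) ^ 2 / Ω ^ 2 else if j = 0 then (Ω + 1) / Ω ^ 2 else 0

variable {n : ℕ} {Ω : ℝ}

lemma thirdOrderDelta_nonneg (hΩ : 0 ≤ Ω) (hΩhi : Ω ≤ 2 * (1 + √2)) (j : ℕ) :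
    0 ≤ thirdOrderDelta Ω j := by
  have hnum : 0 ≤ 4 * (Ω + 1) - Ω ^ 2 := by
    have hsqrt : 1 ≤ √2 := Real.one_le_sqrt.mpr one_le_two
    calc 0 ≤ (2 * (1 + √2) - Ω) * (Ω + 2 * (√2 - 1)) := mul_nonneg (by linarith) (by linarith)
      _ = 4 * (Ω + 1) - Ω ^ 2 := by linear_combination 4 * Real.sq_sqrt zero_le_two
  unfold thirdOrderDelta
  split_ifs <;> positivity

lemma thirdOrderBeta_nonneg (hΩ : 0 ≤ Ω) (j : ℕ) : 0 ≤ thirdOrderBeta n Ω j := by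
  unfold thirdOrderBeta
  split_ifs <;> positivity

theorem orderCond_thirdOrder {ω : ℕ → ℝ} (hlast : ω (n + 1) = 1) (hΩ : OmegaSum ω n ≠ 0) :
    OrderCond (n + 1) 3 ω ((OmegaSum ω n - 2) / OmegaSum ω n)
      (thirdOrderDelta (OmegaSum ω n)) (thirdOrderBeta n (OmegaSum ω n)) := by
  have hn : n ≠ 0 := by rintro rfl; exact hΩ (omegaSum_zero ω)
  have hδ : ∀ j, j ≠ 0 → thirdOrderDelta (OmegaSum ω n) j = 0 := fun j hj => if_neg hj
  have hβ : ∀ j, j ≠ 0 → j ≠ n → thirdOrderBeta n (OmegaSum ω n) j = 0 := fun j hj0 hjn =>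
    (if_neg hjn).trans (if_neg hj0)
  refine ⟨?_, fun m hm1 hm3 => ?_⟩
  · rw [sum_range_succ_eq_add_of_endpoints hn fun j hj0 hjn => by
      rw [hδ j hj0, hβ j hj0 hjn, mul_zero, add_zero]]
    simp only [thirdOrderDelta, thirdOrderBeta, hn, hn.symm, if_true, if_false]
    field_simp
    ring
  · rw [sum_range_succ_eq_add_of_endpoints hn fun j hj0 hjn => by
      rw [hδ j hj0, hβ j hj0 hjn]; ring]
    simp only [thirdOrderDelta, thirdOrderBeta, hn, hn.symm, if_true, if_false, omegaSum_zero,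
      omegaSum_succ, hlast]
    interval_cases m <;> norm_num <;> field_simp <;> ring

end ThirdOrder

theorem optimal_third_order_formula_general
    (k : ℕ) (hk : 2 ≤ k)
    (ω : ℕ → ℝ) (hω : ∀ i, 1 ≤ i → i ≤ k → 0 < ω i) (hωk : ω k = 1)
    (Ω : ℝ) (hΩ : Ω = OmegaSum ω (k - 1)) (hΩhi : Ω ≤ 2 * (1 + Real.sqrt 2))
    (r : ℝ) (hr : r = (Ω - 2) / Ω)
    (δ β : ℕ → ℝ)
    (hδdef : δ = fun j => if j = 0 then (4 * (Ω + 1) - Ω ^ 2) / Ω ^ 3 else 0)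
    (hβdef : β = fun j => if j = k - 1 then (Ω + 1) ^ 2 / Ω ^ 2
      else if j = 0 then (Ω + 1) / Ω ^ 2 else 0) :
    ((∀ j < k, 0 ≤ δ j) ∧ (∀ j < k, 0 ≤ β j) ∧ OrderCond k 3 ω r δ β) ∧
    (∀ s : ℝ, 0 ≤ s → ∀ δ' β' : ℕ → ℝ,
      (∀ j < k, 0 ≤ δ' j) → (∀ j < k, 0 ≤ β' j) → OrderCond k 3 ω s δ' β' → s ≤ r) := by
  obtain ⟨n, rfl⟩ : ∃ n, k = n + 1 := ⟨k - 1, by omega⟩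
  rw [Nat.add_sub_cancel] at hΩ hβdef
  change δ = thirdOrderDelta Ω at hδdef
  change β = thirdOrderBeta n Ω at hβdef
  have hω' : ∀ i < n, 0 < ω (i + 1) := fun i hi => hω _ (by omega) (by omega)
  have hΩpos : 0 < OmegaSum ω n := omegaSum_pos (by omega) hω'
  subst hΩ hr hδdef hβdef
  refine ⟨⟨fun j _ => thirdOrderDelta_nonneg hΩpos.le hΩhi j,
    fun j _ => thirdOrderBeta_nonneg hΩpos.le j, orderCond_thirdOrder hωk hΩpos.ne'⟩, ?_⟩
  intro s hs δ' β' hδ' hβ' hord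
  have hbound := hord.mul_last_step_le (m := 1) le_rfl hs hδ' hβ' (fun i hi => (hω' i hi).le)
    (hωk ▸ one_pos)
  rw [hωk] at hbound
  rw [le_div_iff₀ hΩpos]
  push_cast at hbound
  linarith

/-- **Optimality of the third-order formula for `2 < Ω_{k−1} ≤ 2(1+√2)`.**
With `ω_k = 1`, `Ω = Ω_{k−1}` and `2 < Ω ≤ 2(1+√2)`, the formula with
`δ₀ = (4(Ω+1) − Ω²)/Ω³`, `β₀ = (Ω+1)/Ω²`, `β_{k−1} = (Ω+1)²/Ω²` (all other entries
zero) is nonnegative, satisfies the order-3 conditions with parameter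
`r = (Ω − 2)/Ω`, and no third-order `k`-step formula achieves a larger parameter. -/
theorem optimal_third_order_formula
    (k : ℕ) (hk : 2 ≤ k)
    (ω : ℕ → ℝ) (hω : ∀ i, 1 ≤ i → i ≤ k → 0 < ω i) (hωk : ω k = 1)
    (Ω : ℝ) (hΩ : Ω = OmegaSum ω (k - 1))
    (hΩlo : 2 < Ω) (hΩhi : Ω ≤ 2 * (1 + Real.sqrt 2))
    (r : ℝ) (hr : r = (Ω - 2) / Ω)
    (δ β : ℕ → ℝ)
    (hδdef : δ = fun j => if j = 0 then (4 * (Ω + 1) - Ω ^ 2) / Ω ^ 3 else 0)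
    (hβdef : β = fun j => if j = k - 1 then (Ω + 1) ^ 2 / Ω ^ 2
      else if j = 0 then (Ω + 1) / Ω ^ 2 else 0) :
    ((∀ j < k, 0 ≤ δ j) ∧ (∀ j < k, 0 ≤ β j) ∧ OrderCond k 3 ω r δ β) ∧
    (∀ s : ℝ, 0 < s → ∀ δ' β' : ℕ → ℝ,
      (∀ j < k, 0 ≤ δ' j) → (∀ j < k, 0 ≤ β' j) → OrderCond k 3 ω s δ' β' → s ≤ r) := by
  obtain ⟨hformula, hoptimal⟩ :=
    optimal_third_order_formula_general k hk ω hω hωk Ω hΩ hΩhi r hr δ β hδdef hβdef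
  exact ⟨hformula, fun s hs => hoptimal s hs.le⟩
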